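/- arXiv:cs/0110010 — 2 statements merged into one kernel-verified Lean document; each statement's English description precedes it below -/
import Mathlib

section
/- For any initialized pair (v₀,v) of clock valuations and any δ > 0 such that v has at most one pattern change for δ, and for any clock constraint c: (for all 0 ≤ δ' ≤ δ, v+δ' satisfies c) iff (v satisfies c and v+δ satisfies c). -/
open scoped BigOperators

namespace PTApaper

/-! ## Clock valuations -/

/-- A (raw) clock valuation on clocks `x_0, …, x_k`. -/
abbrev Val (k : ℕ) := Fin (k+1) → ℝ

/-- A discrete clock valuation. -/
abbrev DVal (k : ℕ) := Fin (k+1) → ℕ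

/-- A clock valuation takes nonnegative values. -/
def IsVal {k : ℕ} (v : Val k) : Prop := ∀ i, 0 ≤ v i

/-- A valuation is initial if the auxiliary clock `x_0` has value 0. -/
def Initial {k : ℕ} (v : Val k) : Prop := v 0 = 0

/-- The integral part `int(v)` of a valuation. -/
noncomputable def intPart {k : ℕ} (v : Val k) : DVal k := fun i => (⌊v i⌋).toNat

/-- The fractional parts of the relative representation `rel(v)`:
`fract(rel(v))(0) = fract (1 - fract (v 0))` and
`fract(rel(v))(i) = fract (fract (v i) + fract(rel(v))(0))` for `i ∈ K⁺`. -/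
noncomputable def relFract {k : ℕ} (v : Val k) : Fin (k+1) → ℝ := fun i =>
  if i = 0 then Int.fract (1 - Int.fract (v 0))
  else Int.fract (Int.fract (v i) + Int.fract (1 - Int.fract (v 0)))

/-- Synchronous clock progress `v + δ`. -/
def shift {k : ℕ} (v : Val k) (δ : ℝ) : Val k := fun i => v i + δ

/-- Clock reset `v↓_r`. -/
def resetVal {k : ℕ} (r : Finset (Fin (k+1))) (v : Val k) : Val k :=
  fun i => if i ∈ r then 0 else v i

/-! ## Patterns -/

/-- A raw pattern: a finite sequence of subsets of `K⁰ ∪ K¹`, where the index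
`(i, false)` stands for `i⁰` and `(i, true)` stands for `i¹`. -/
abbrev PatSeq (k : ℕ) := List (Finset (Fin (k+1) × Bool))

/-- The well-formedness conditions making `η = p₀,…,p_n` a pattern:
`0 ≤ n < 2(k+1)`, the `p_m` are nonempty and pairwise disjoint, `0⁰ ∈ p₀`,
and `p₀ ∪ … ∪ p_n = K⁰ ∪ K¹`. -/
def IsPattern {k : ℕ} (η : PatSeq k) : Prop :=
  η.length ≤ 2*(k+1) ∧
  (∀ p ∈ η, p.Nonempty) ∧
  η.Pairwise Disjoint ∧
  ((0 : Fin (k+1)), false) ∈ η.getD 0 ∅ ∧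
  (∀ x : Fin (k+1) × Bool, ∃ p ∈ η, x ∈ p)

/-- `bval v₀ v₁ b` is `v_b`. -/
def bval {k : ℕ} (v₀ v₁ : Val k) : Bool → Val k
  | false => v₀
  | true => v₁

/-- The defining ordering condition for "`(v₀,v₁)` has pattern `η = p₀,…,p_n`":
for all positions `m, m'`, copies `b, b'` and clocks `i, i'` with `i^b ∈ p_m` and
`i'^{b'} ∈ p_{m'}`, `fract(rel(v_b))(i) = fract(rel(v_{b'}))(i')` iff `m = m'`, and
`fract(rel(v_b))(i) < fract(rel(v_{b'}))(i')` iff `m < m'`. -/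
def HasPatternOrd {k : ℕ} (v₀ v₁ : Val k) (η : PatSeq k) : Prop :=
  ∀ m m' : Fin η.length, ∀ b b' : Bool, ∀ i i' : Fin (k+1),
    (i, b) ∈ η.get m → (i', b') ∈ η.get m' →
      ((relFract (bval v₀ v₁ b) i = relFract (bval v₀ v₁ b') i' ↔ m = m') ∧
       (relFract (bval v₀ v₁ b) i < relFract (bval v₀ v₁ b') i' ↔ (m : ℕ) < (m' : ℕ)))

/-- `(v₀,v₁)` has pattern `η` (written `[(v₀,v₁)] = η`). -/
def PatternOf {k : ℕ} (v₀ v₁ : Val k) (η : PatSeq k) : Prop :=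
  IsPattern η ∧ HasPatternOrd v₀ v₁ η

/-- A pattern is initial if it is the pattern of `(v₀,v₀)` for some initial valuation `v₀`. -/
def InitialPattern {k : ℕ} (η : PatSeq k) : Prop :=
  ∃ v₀ : Val k, IsVal v₀ ∧ Initial v₀ ∧ PatternOf v₀ v₀ η

/-- The equivalence `(v₀¹,v₁) ≈ (v₀²,v₂)`: same pattern and same integral parts. -/
def PairEquiv {k : ℕ} (va vb vc vd : Val k) : Prop :=
  (∃ η : PatSeq k, PatternOf va vb η ∧ PatternOf vc vd η) ∧
  intPart va = intPart vc ∧ intPart vb = intPart vd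

/-! ## now-position, Next, next, reset -/

/-- The index of the now-position, i.e. the position containing `0¹`. -/
def nowIdx {k : ℕ} (η : PatSeq k) : ℕ :=
  η.findIdx fun p => decide (((0 : Fin (k+1)), true) ∈ p)

/-- A merge-pattern: the now-position is the singleton `{0¹}`. -/
def IsMergePat {k : ℕ} (η : PatSeq k) : Prop :=
  η.getD (nowIdx η) ∅ = ({((0 : Fin (k+1)), true)} : Finset (Fin (k+1) × Bool))

/-- A split-pattern: a pattern that is not a merge-pattern. -/
def IsSplitPat {k : ℕ} (η : PatSeq k) : Prop := ¬ IsMergePat η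

/-- The next pattern `Next(η)`. -/
def NextPat {k : ℕ} (η : PatSeq k) : PatSeq k :=
  let i := nowIdx η
  if η.getD i ∅ = ({((0 : Fin (k+1)), true)} : Finset (Fin (k+1) × Bool)) then
    -- merge case : `p₀, …, p_{i-1} ∪ {0¹}, p_{i+1}, …, p_n`
    η.take (i-1) ++ [η.getD (i-1) ∅ ∪ {((0 : Fin (k+1)), true)}] ++ η.drop (i+1)
  else if i = 0 then
    -- split case with `i = 0` : `p₀ ∖ {0¹}, p₁, …, p_n, {0¹}`
    (η.getD 0 ∅ \ {((0 : Fin (k+1)), true)}) :: (η.drop 1 ++ [{((0 : Fin (k+1)), true)}])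
  else
    -- split case with `i > 0` : `p₀, …, p_{i-1}, {0¹}, p_i ∖ {0¹}, p_{i+1}, …, p_n`
    η.take i ++ [{((0 : Fin (k+1)), true)}, η.getD i ∅ \ {((0 : Fin (k+1)), true)}]
      ++ η.drop (i+1)

/-- The counter update of `next(η,u)`. -/
def nextD {k : ℕ} (η : PatSeq k) (u : DVal k) : DVal k :=
  let i := nowIdx η
  if η.getD i ∅ = ({((0 : Fin (k+1)), true)} : Finset (Fin (k+1) × Bool)) then
    fun j =>
      if j = 0 then (if i = 1 then u 0 + 1 else u 0)
      else (if (j, true) ∈ η.getD (i-1) ∅ then u j + 1 else u j)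
  else u

/-- `next(η,u)`. -/
def nextPair {k : ℕ} (η : PatSeq k) (u : DVal k) : PatSeq k × DVal k :=
  (NextPat η, nextD η u)

/-- The pattern part of `reset_r(η,u)`: all indices `j¹`, `j ∈ r`, are moved into the
now-position, and entries that become empty are deleted. -/
def ResetPat {k : ℕ} (r : Finset (Fin (k+1))) (η : PatSeq k) : PatSeq k :=
  let r1 : Finset (Fin (k+1) × Bool) := r.image (fun j => (j, true))
  let i := nowIdx η
  (η.mapIdx (fun m p => if m = i then p ∪ r1 else p \ r1)).filter (fun p => decide (p ≠ ∅))

/-- The counter update of `reset_r(η,u)`. -/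
def resetD {k : ℕ} (r : Finset (Fin (k+1))) (u : DVal k) : DVal k :=
  fun j => if j ∈ r then 0 else u j

/-- `reset_r(η,u)`. -/
def resetPair {k : ℕ} (r : Finset (Fin (k+1))) (η : PatSeq k) (u : DVal k) :
    PatSeq k × DVal k :=
  (ResetPat r η, resetD r u)

/-! ## Pattern changes -/

/-- `v` has no pattern change for `δ`. -/
def NoChange {k : ℕ} (v₀ v : Val k) (δ : ℝ) : Prop :=
  ∃ η : PatSeq k, PatternOf v₀ v η ∧
    ∀ δ', 0 ≤ δ' → δ' ≤ δ → PatternOf v₀ (shift v δ') η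

/-- `v` has one pattern change for `δ`. -/
def OneChange {k : ℕ} (v₀ v : Val k) (δ : ℝ) : Prop :=
  ∃ η η' : PatSeq k, PatternOf v₀ v η ∧ PatternOf v₀ (shift v δ) η' ∧
    NextPat η = η' ∧
    ((∀ δ', 0 < δ' → δ' < δ → PatternOf v₀ (shift v δ') η) ∨
     (∀ δ', 0 < δ' → δ' < δ → PatternOf v₀ (shift v δ') η'))

/-- `v` has `n` pattern changes for `δ` (for `n ≥ 1`): `δ = δ₁ + … + δ_n` with each
`δ_j > 0` and `v + δ₁ + … + δ_j` has one pattern change for `δ_{j+1}`. -/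
def NChanges {k : ℕ} (v₀ v : Val k) (n : ℕ) (δ : ℝ) : Prop :=
  ∃ d : ℕ → ℝ, (∀ j < n, 0 < d j) ∧ (∑ j ∈ Finset.range n, d j) = δ ∧
    ∀ j < n, OneChange v₀ (shift v (∑ j' ∈ Finset.range j, d j')) (d j)

/-! ## Clock constraints -/

/-- Comparison operators `<, ≤, =, ≥, >`. -/
inductive CCmp | lt | le | eq | ge | gt

/-- Evaluation of a comparison operator on reals. -/
def CCmp.evalR : CCmp → ℝ → ℝ → Prop
  | .lt, a, b => a < b
  | .le, a, b => a ≤ b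
  | .eq, a, b => a = b
  | .ge, a, b => a ≥ b
  | .gt, a, b => a > b

/-- Clock constraints over the clocks `x_1, …, x_k` (indexed by `Fin k`, clock
`x_{i+1}` for `i : Fin k`): Boolean combinations of `x_i - x_j # d` and `x_i # d`. -/
inductive CC (k : ℕ)
  | diff (i j : Fin k) (op : CCmp) (d : ℕ) : CC k
  | single (i : Fin k) (op : CCmp) (d : ℕ) : CC k
  | not (c : CC k) : CC k
  | and (c₁ c₂ : CC k) : CC k

/-- `v ∈ c` : the valuation `v` satisfies the clock constraint `c`. -/
def CC.sat {k : ℕ} (v : Val k) : CC k → Prop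
  | .diff i j op d => op.evalR (v i.succ - v j.succ) (d : ℝ)
  | .single i op d => op.evalR (v i.succ) (d : ℝ)
  | .not c => ¬ c.sat v
  | .and c₁ c₂ => c₁.sat v ∧ c₂.sat v

/-- The position (in `η`) of an index `x ∈ K⁰ ∪ K¹`. -/
def posOf {k : ℕ} (η : PatSeq k) (x : Fin (k+1) × Bool) : ℕ :=
  η.findIdx fun p => decide (x ∈ p)

/-- The truth value, given by pattern `η`, of the fractional ordering
`fract(x_a) > fract(x_b)`. -/
def fracGtP {k : ℕ} (η : PatSeq k) (a b : Fin (k+1)) : Prop :=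
  let i := posOf η ((0 : Fin (k+1)), true)
  let m₁ := posOf η (a, true)
  let m₂ := posOf η (b, true)
  (m₁ < i ∧ i ≤ m₂) ∨ (m₂ < m₁ ∧ m₁ < i) ∨ (i ≤ m₂ ∧ m₂ < m₁)

/-- The truth value, given by pattern `η`, of `fract(x_a) = fract(x_b)`. -/
def fracEqP {k : ℕ} (η : PatSeq k) (a b : Fin (k+1)) : Prop :=
  posOf η (a, true) = posOf η (b, true)

/-- The truth value, given by pattern `η`, of `fract(x_a) = 0`. -/
def fracZeroP {k : ℕ} (η : PatSeq k) (a : Fin (k+1)) : Prop :=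
  posOf η (a, true) = posOf η ((0 : Fin (k+1)), true)

/-- `u ∈ c^η` : the discrete valuation `u` satisfies the constraint `c^η`, obtained by
rewriting `c` as `I(c)` over integral parts and fractional orderings and substituting the
truth values of the fractional orderings determined by the pattern `η`. -/
def CC.satP {k : ℕ} (η : PatSeq k) (u : DVal k) : CC k → Prop
  | .diff i j op d =>
      let I : ℤ := (u i.succ : ℤ) - (u j.succ : ℤ)
      (match op with
      | .lt => I < d ∨ (I = d ∧ fracGtP η j.succ i.succ)
      | .le => I < d ∨ (I = d ∧ (fracGtP η j.succ i.succ ∨ fracEqP η i.succ j.succ))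
      | .eq => I = d ∧ fracEqP η i.succ j.succ
      | .ge => I > d ∨ (I = d ∧ (fracGtP η i.succ j.succ ∨ fracEqP η i.succ j.succ))
      | .gt => I > d ∨ (I = d ∧ fracGtP η i.succ j.succ))
  | .single i op d =>
      let I : ℤ := (u i.succ : ℤ)
      (match op with
      | .lt => I < d
      | .le => I < d ∨ (I = d ∧ fracZeroP η i.succ)
      | .eq => I = d ∧ fracZeroP η i.succ
      | .ge => I ≥ d
      | .gt => I > d ∨ (I = d ∧ ¬ fracZeroP η i.succ))
  | .not c => ¬ c.satP η u
  | .and c₁ c₂ => c₁.satP η u ∧ c₂.satP η u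

/-! ## Pushdown timed automata -/

/-- A pushdown timed automaton `⟨S, {x₁,…,x_k}, Inv, R, Γ, PD⟩`:
`Inv` assigns an invariant to each state, `R s s' = (Rc s s', Rr s s')` assigns a reset
condition and a set of clock resets (a subset of `K⁺`) to each edge, and
`PD s s' = (PDa s s', PDw s s')` assigns a stack operation to each edge. -/
structure PTA (k : ℕ) (S : Type) (Γ : Type) where
  Inv : S → CC k
  Rc : S → S → CC k
  Rr : S → S → Finset (Fin (k+1))
  hRr : ∀ s s', (0 : Fin (k+1)) ∉ Rr s s'
  PDa : S → S → Γ
  PDw : S → S → List Γ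

/-- A configuration `(s, v, w)` of a PTA. -/
abbrev Config (k : ℕ) (S Γ : Type) := S × Val k × List Γ

/-- The one-step transition relation `→_A` of a PTA. -/
def Step {k : ℕ} {S Γ : Type} (A : PTA k S Γ) (c₁ c₂ : Config k S Γ) : Prop :=
  -- progress transition
  (c₁.1 = c₂.1 ∧ c₁.2.2 = c₂.2.2 ∧
    ∃ δ : ℝ, 0 < δ ∧ c₂.2.1 = shift c₁.2.1 δ ∧
      ∀ δ', 0 ≤ δ' → δ' ≤ δ → (A.Inv c₁.1).sat (shift c₁.2.1 δ')) ∨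
  -- reset transition
  ((A.Inv c₁.1).sat c₁.2.1 ∧ (A.Rc c₁.1 c₂.1).sat c₁.2.1 ∧
    c₂.2.1 = resetVal (A.Rr c₁.1 c₂.1) c₁.2.1 ∧ (A.Inv c₂.1).sat c₂.2.1 ∧
    ∃ w : List Γ, c₁.2.2 = A.PDa c₁.1 c₂.1 :: w ∧ c₂.2.2 = A.PDw c₁.1 c₂.1 ++ w)

/-- `→*_A`, the transitive closure of `→_A`. -/
def Reach {k : ℕ} {S Γ : Type} (A : PTA k S Γ) : Config k S Γ → Config k S Γ → Prop :=
  Relation.TransGen (Step A)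

/-- `(s₀,u₀,w₀) →*_{A,η} (s₁,u₁,w₁)`. -/
def ReachPat {k : ℕ} {S Γ : Type} (A : PTA k S Γ) (η : PatSeq k)
    (s₀ : S) (u₀ : DVal k) (w₀ : List Γ) (s₁ : S) (u₁ : DVal k) (w₁ : List Γ) : Prop :=
  ∃ v₀ v₁ : Val k, IsVal v₀ ∧ IsVal v₁ ∧ v₀ 0 = 0 ∧
    intPart v₀ = u₀ ∧ intPart v₁ = u₁ ∧ PatternOf v₀ v₁ η ∧
    Reach A (s₀, v₀, w₀) (s₁, v₁, w₁)

/-! ## The pattern graph -/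

/-- A configuration `(s, η, u, w)` of the pattern graph. -/
abbrev GConfig (k : ℕ) (S Γ : Type) := S × PatSeq k × DVal k × List Γ

/-- The one-step transition relation `→_G` of the pattern graph `G` of a PTA `A`,
through progress edges, stay edges and reset edges. -/
def GStep {k : ℕ} {S Γ : Type} (A : PTA k S Γ) (c₁ c₂ : GConfig k S Γ) : Prop :=
  -- progress edge
  (c₁.1 = c₂.1 ∧ c₁.2.2.2 = c₂.2.2.2 ∧
    nextPair c₁.2.1 c₁.2.2.1 = (c₂.2.1, c₂.2.2.1) ∧
    (A.Inv c₁.1).satP c₁.2.1 c₁.2.2.1 ∧ (A.Inv c₁.1).satP c₂.2.1 c₂.2.2.1) ∨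
  -- stay edge
  (c₁ = c₂ ∧ IsMergePat c₁.2.1 ∧ (A.Inv c₁.1).satP c₁.2.1 c₁.2.2.1) ∨
  -- reset edge
  (resetPair (A.Rr c₁.1 c₂.1) c₁.2.1 c₁.2.2.1 = (c₂.2.1, c₂.2.2.1) ∧
    ((A.Rc c₁.1 c₂.1).and (A.Inv c₁.1)).satP c₁.2.1 c₁.2.2.1 ∧
    (A.Inv c₂.1).satP c₂.2.1 c₂.2.2.1 ∧
    ∃ w : List Γ, c₁.2.2.2 = A.PDa c₁.1 c₂.1 :: w ∧ c₂.2.2.2 = A.PDw c₁.1 c₂.1 ++ w)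

/-- `→*_G`, the transitive closure of `→_G`. -/
def GReach {k : ℕ} {S Γ : Type} (A : PTA k S Γ) : GConfig k S Γ → GConfig k S Γ → Prop :=
  Relation.TransGen (GStep A)

end PTApaper

/-!
For a clock `i ≠ 0`, `fract(rel(v))(i) = fract(rel(v))(0)` exactly when `v(i)` is an integer, so a
pattern determines which clocks are integral. While the pattern stays constant, each clock is
therefore either integral at all times or at none. As it sweeps out an interval, it stands still in
the first case and never crosses an integer in the second; differences of clocks do not move at all.
Hence truth values of constraints are constant, too. With at most one pattern change in `[0, δ]`,
the pattern is constant on `[0, δ)` or on `(0, δ]`, and either interval contains an endpoint.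
-/

namespace PTApaper

section Order

variable {α : Type*} [LinearOrder α]

theorem cmp_eq_cmp_of_ordConnected_of_notMem {T : Set α} (hT : T.OrdConnected) {a x y : α}
    (ha : a ∉ T) (hx : x ∈ T) (hy : y ∈ T) : cmp x a = cmp y a := by
  have hxa : x ≠ a := ne_of_mem_of_not_mem hx ha
  have hya : y ≠ a := ne_of_mem_of_not_mem hy ha
  rcases hxa.lt_or_gt with hxa | hxa <;> rcases hya.lt_or_gt with hya | hya
  · rw [hxa.cmp_eq_lt, hya.cmp_eq_lt]
  · exact absurd (hT.out hx hy ⟨hxa.le, hya.le⟩) ha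
  · exact absurd (hT.out hy hx ⟨hya.le, hxa.le⟩) ha
  · rw [hxa.cmp_eq_gt, hya.cmp_eq_gt]

theorem cmp_eq_cmp_of_isPreconnected_of_mem_iff_mem [TopologicalSpace α] [OrderClosedTopology α]
    {C T : Set α} (hC : IsTotallyDisconnected C) (hT : IsPreconnected T)
    (hCT : ∀ x ∈ T, ∀ y ∈ T, x ∈ C ↔ y ∈ C) {a x y : α} (ha : a ∈ C) (hx : x ∈ T) (hy : y ∈ T) :
    cmp x a = cmp y a := by
  by_cases haT : a ∈ T
  · have hTC : T ⊆ C := fun z hz => (hCT a haT z hz).1 ha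
    rw [hC T hTC hT hx hy]
  · exact cmp_eq_cmp_of_ordConnected_of_notMem hT.ordConnected haT hx hy

end Order

theorem isTotallyDisconnected_range_intCast :
    IsTotallyDisconnected (Set.range ((↑) : ℤ → ℝ)) :=
  (Set.countable_range _).isTotallyDisconnected

theorem CCmp.evalR_congr (op : CCmp) {a b a' b' : ℝ} (h : cmp a b = cmp a' b') :
    op.evalR a b ↔ op.evalR a' b' := by
  cases op with
  | lt => exact lt_iff_lt_of_cmp_eq_cmp h
  | le => exact le_iff_le_of_cmp_eq_cmp h
  | eq => exact eq_iff_eq_of_cmp_eq_cmp h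
  | ge => exact le_iff_le_of_cmp_eq_cmp (cmp_eq_cmp_symm.1 h)
  | gt => exact lt_iff_lt_of_cmp_eq_cmp (cmp_eq_cmp_symm.1 h)

section Pattern

variable {k : ℕ} {v₀ v w₀ w : Val k} {η : PatSeq k} {S : Set ℝ} {δ : ℝ}

theorem CC.sat_congr
    (hsub : ∀ i j : Fin k, v i.succ - v j.succ = w i.succ - w j.succ)
    (hcmp : ∀ (i : Fin k) (d : ℕ), cmp (v i.succ) (d : ℝ) = cmp (w i.succ) (d : ℝ)) (c : CC k) :
    c.sat v ↔ c.sat w := by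
  induction c with
  | diff i j op d => simp only [CC.sat, hsub]
  | single i op d => exact op.evalR_congr (hcmp i d)
  | not c ih => exact not_congr ih
  | and c₁ c₂ ih₁ ih₂ => exact and_congr ih₁ ih₂

theorem shift_zero (v : Val k) : shift v 0 = v :=
  funext fun i => add_zero (v i)

theorem relFract_eq_relFract_zero_iff (v : Val k) {i : Fin (k + 1)} (hi : i ≠ 0) :
    relFract v i = relFract v 0 ↔ v i ∈ Set.range ((↑) : ℤ → ℝ) := by
  simp only [relFract, if_neg hi, if_true]
  set r := 1 - Int.fract (v 0)
  calc Int.fract (Int.fract (v i) + Int.fract r) = Int.fract r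
      ↔ ∃ z : ℤ, Int.fract (v i) + Int.fract r - Int.fract r = z := by
        rw [Int.fract_eq_iff, and_iff_right (Int.fract_nonneg r),
          and_iff_right (Int.fract_lt_one r)]
    _ ↔ Int.fract (Int.fract (v i)) = 0 := by
        simp only [add_sub_cancel_right, Int.fract_eq_zero_iff, Set.mem_range, eq_comm]
    _ ↔ v i ∈ Set.range ((↑) : ℤ → ℝ) := by
        rw [Int.fract_fract, Int.fract_eq_zero_iff]

theorem PatternOf.relFract_eq_iff (hv : PatternOf v₀ v η) (hw : PatternOf w₀ w η)
    (b b' : Bool) (i i' : Fin (k + 1)) :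
    relFract (bval v₀ v b) i = relFract (bval v₀ v b') i' ↔
      relFract (bval w₀ w b) i = relFract (bval w₀ w b') i' := by
  obtain ⟨⟨-, -, -, -, hcover⟩, hordv⟩ := hv
  obtain ⟨p, hp, hip⟩ := hcover (i, b)
  obtain ⟨p', hp', hip'⟩ := hcover (i', b')
  obtain ⟨m, rfl⟩ := List.mem_iff_get.1 hp
  obtain ⟨m', rfl⟩ := List.mem_iff_get.1 hp'
  exact (hordv m m' b b' i i' hip hip').1.trans (hw.2 m m' b b' i i' hip hip').1.symm

theorem PatternOf.mem_range_intCast_iff (hv : PatternOf v₀ v η) (hw : PatternOf w₀ w η)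
    {i : Fin (k + 1)} (hi : i ≠ 0) :
    v i ∈ Set.range ((↑) : ℤ → ℝ) ↔ w i ∈ Set.range ((↑) : ℤ → ℝ) := by
  rw [← relFract_eq_relFract_zero_iff v hi, ← relFract_eq_relFract_zero_iff w hi]
  exact hv.relFract_eq_iff hw true true i 0

/-- The pattern of `(v₀, v + t)` is defined and does not depend on `t ∈ S`. -/
def PatternConstOn (v₀ v : Val k) (S : Set ℝ) : Prop :=
  ∃ η : PatSeq k, ∀ t ∈ S, PatternOf v₀ (shift v t) η

theorem PatternConstOn.cmp_natCast_eq (h : PatternConstOn v₀ v S) (hS : IsPreconnected S)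
    {s t : ℝ} (hs : s ∈ S) (ht : t ∈ S) {i : Fin (k + 1)} (hi : i ≠ 0) (d : ℕ) :
    cmp (shift v s i) (d : ℝ) = cmp (shift v t i) (d : ℝ) := by
  obtain ⟨η, hη⟩ := h
  have hpath : IsPreconnected ((fun u => shift v u i) '' S) :=
    hS.image _ (continuous_const_add (v i)).continuousOn
  refine cmp_eq_cmp_of_isPreconnected_of_mem_iff_mem isTotallyDisconnected_range_intCast hpath ?_
    ⟨d, Int.cast_natCast d⟩ (Set.mem_image_of_mem _ hs) (Set.mem_image_of_mem _ ht)
  rintro _ ⟨u, hu, rfl⟩ _ ⟨u', hu', rfl⟩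
  exact (hη u hu).mem_range_intCast_iff (hη u' hu') hi

theorem PatternConstOn.sat_shift_iff (h : PatternConstOn v₀ v S) (hS : IsPreconnected S)
    {s t : ℝ} (hs : s ∈ S) (ht : t ∈ S) (c : CC k) :
    c.sat (shift v s) ↔ c.sat (shift v t) :=
  CC.sat_congr (fun i j => by simp only [shift, add_sub_add_right_eq_sub])
    (fun i d => h.cmp_natCast_eq hS hs ht i.succ_ne_zero d) c

theorem NoChange.patternConstOn_Ico (h : NoChange v₀ v δ) :
    PatternConstOn v₀ v (Set.Ico 0 δ) :=
  let ⟨η, _, hη⟩ := h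
  ⟨η, fun t ht => hη t ht.1 ht.2.le⟩

theorem OneChange.patternConstOn_Ico_or_Ioc (h : OneChange v₀ v δ) :
    PatternConstOn v₀ v (Set.Ico 0 δ) ∨ PatternConstOn v₀ v (Set.Ioc 0 δ) := by
  obtain ⟨η, η', hstart, hend, -, hmid | hmid⟩ := h
  · refine Or.inl ⟨η, fun t ⟨ht, htδ⟩ => ?_⟩
    rcases ht.eq_or_lt with rfl | ht
    · rwa [shift_zero]
    · exact hmid t ht htδ
  · refine Or.inr ⟨η', fun t ⟨ht, htδ⟩ => ?_⟩
    rcases htδ.eq_or_lt with rfl | htδ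
    · exact hend
    · exact hmid t ht htδ

theorem test_endpoints_general (hδ : 0 ≤ δ)
    (h : PatternConstOn v₀ v (Set.Ico 0 δ) ∨ PatternConstOn v₀ v (Set.Ioc 0 δ)) (c : CC k) :
    (∀ δ', 0 ≤ δ' → δ' ≤ δ → c.sat (shift v δ')) ↔ (c.sat v ∧ c.sat (shift v δ)) := by
  refine ⟨fun hc => ⟨shift_zero v ▸ hc 0 le_rfl hδ, hc δ hδ le_rfl⟩, ?_⟩
  rintro ⟨hstart, hend⟩ t ht htδ
  rw [← shift_zero v] at hstart
  rcases ht.eq_or_lt with rfl | ht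
  · exact hstart
  rcases htδ.eq_or_lt with rfl | htδ
  · exact hend
  rcases h with h | h
  · exact (h.sat_shift_iff isPreconnected_Ico ⟨le_rfl, ht.trans htδ⟩ ⟨ht.le, htδ⟩ c).1 hstart
  · exact (h.sat_shift_iff isPreconnected_Ioc ⟨ht.trans htδ, le_rfl⟩ ⟨ht, htδ.le⟩ c).1 hend

end Pattern

/-- Lemma `tests`(2). If `(v₀,v)` is an initialized pair, `δ > 0`, and
`v` has at most one pattern change for `δ`, then for every clock constraint `c`:
`∀ 0 ≤ δ' ≤ δ, v+δ' ∈ c` iff (`v ∈ c` and `v+δ ∈ c`). -/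
theorem test_endpoints (k : ℕ) (hk : 1 ≤ k) (v₀ v : Val k)
    (hv₀ : IsVal v₀) (hv : IsVal v) (h0 : Initial v₀)
    (δ : ℝ) (hδ : 0 < δ)
    (hchange : NoChange v₀ v δ ∨ OneChange v₀ v δ) (c : CC k) :
    (∀ δ', 0 ≤ δ' → δ' ≤ δ → c.sat (shift v δ')) ↔ (c.sat v ∧ c.sat (shift v δ)) :=
  test_endpoints_general hδ.le
    (hchange.elim (Or.inl ∘ NoChange.patternConstOn_Ico) OneChange.patternConstOn_Ico_or_Ioc) c

end PTApaper
end

section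
/- For any initialized pairs (v₀¹,v₁) and (v₀²,v₂) of clock valuations with (v₀¹,v₁) ≈ (v₀²,v₂), and for any clock constraint c: v₁ satisfies c iff v₂ satisfies c. -/
open scoped BigOperators

namespace PTApaper

/-! The fractional part of a clock is the distance on the circle `ℝ / ℤ` from the relative position
of the auxiliary clock `x_0` to its own relative position. Hence a pattern, which linearly orders
the relative positions, also orders the fractional parts of the clocks and decides which of them
vanish. Together with the integral parts this settles every comparison `x_i - x_j # d`, and
`x_i # d` is the instance in which `x_j` is replaced by `0`. -/

section Fract

variable {R : Type*} [Ring R] [LinearOrder R] [IsStrictOrderedRing R] [FloorRing R]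

lemma fract_sub_eq_sub_of_le {a c : R} (ha : a < 1) (hc : 0 ≤ c) (hca : c ≤ a) :
    Int.fract (a - c) = a - c :=
  Int.fract_eq_self.2 ⟨sub_nonneg.2 hca, (sub_le_self a hc).trans_lt ha⟩

lemma fract_sub_eq_sub_add_one_of_lt {a c : R} (ha : 0 ≤ a) (hc : c < 1) (hac : a < c) :
    Int.fract (a - c) = a - c + 1 :=
  Int.fract_eq_iff.2 ⟨by grind, by grind, -1, by push_cast; abel⟩

lemma fract_sub_lt_fract_sub_iff {a b c : R} (ha : a ∈ Set.Ico 0 1) (hb : b ∈ Set.Ico 0 1)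
    (hc : c ∈ Set.Ico 0 1) :
    Int.fract (a - c) < Int.fract (b - c) ↔
      (c ≤ a ∧ a < b) ∨ (a < b ∧ b < c) ∨ (b < c ∧ c ≤ a) := by
  obtain ⟨ha₀, ha₁⟩ := ha
  obtain ⟨hb₀, hb₁⟩ := hb
  obtain ⟨hc₀, hc₁⟩ := hc
  rcases le_or_gt c a with hca | hac <;> rcases le_or_gt c b with hcb | hbc
  · rw [fract_sub_eq_sub_of_le ha₁ hc₀ hca, fract_sub_eq_sub_of_le hb₁ hc₀ hcb]
    grind
  · rw [fract_sub_eq_sub_of_le ha₁ hc₀ hca, fract_sub_eq_sub_add_one_of_lt hb₀ hc₁ hbc]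
    grind
  · rw [fract_sub_eq_sub_add_one_of_lt ha₀ hc₁ hac, fract_sub_eq_sub_of_le hb₁ hc₀ hcb]
    grind
  · rw [fract_sub_eq_sub_add_one_of_lt ha₀ hc₁ hac, fract_sub_eq_sub_add_one_of_lt hb₀ hc₁ hbc]
    grind

lemma sub_lt_intCast_iff (a b : R) (n : ℤ) :
    a - b < n ↔ ⌊a⌋ - ⌊b⌋ < n ∨ (⌊a⌋ - ⌊b⌋ = n ∧ Int.fract a < Int.fract b) := by
  have hsub : a - b = ((⌊a⌋ - ⌊b⌋ : ℤ) : R) + (Int.fract a - Int.fract b) := by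
    rw [Int.fract, Int.fract]
    push_cast
    abel
  have ha₀ := Int.fract_nonneg a
  have ha₁ := Int.fract_lt_one a
  have hb₀ := Int.fract_nonneg b
  have hb₁ := Int.fract_lt_one b
  rw [hsub]
  rcases lt_trichotomy (⌊a⌋ - ⌊b⌋) n with hlt | heq | hgt
  · have : ((⌊a⌋ - ⌊b⌋ : ℤ) : R) + 1 ≤ n := by exact_mod_cast hlt
    exact iff_of_true (by grind) (.inl hlt)
  · simp [heq]
  · have : (n : R) + 1 ≤ ((⌊a⌋ - ⌊b⌋ : ℤ) : R) := by exact_mod_cast hgt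
    exact iff_of_false (by grind) (by lia)

lemma sub_lt_intCast_congr {a b a' b' : R} (ha : ⌊a⌋ = ⌊a'⌋) (hb : ⌊b⌋ = ⌊b'⌋)
    (hab : Int.fract a < Int.fract b ↔ Int.fract a' < Int.fract b') (n : ℤ) :
    a - b < n ↔ a' - b' < n := by
  rw [sub_lt_intCast_iff, sub_lt_intCast_iff, ha, hb, hab]

lemma intCast_lt_sub_congr {a b a' b' : R} (ha : ⌊a⌋ = ⌊a'⌋) (hb : ⌊b⌋ = ⌊b'⌋)
    (hba : Int.fract b < Int.fract a ↔ Int.fract b' < Int.fract a') (n : ℤ) :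
    n < a - b ↔ n < a' - b' := by
  simpa only [Int.cast_neg, ← neg_sub a b, ← neg_sub a' b', neg_lt_neg_iff] using
    sub_lt_intCast_congr hb ha hba (-n)

end Fract

namespace CCmp

lemma evalR_congr_s14 {a b d : ℝ} (hlt : a < d ↔ b < d) (hgt : d < a ↔ d < b) (op : CCmp) :
    op.evalR a d ↔ op.evalR b d := by
  cases op with
  | lt => exact hlt
  | le => exact le_iff_le_iff_lt_iff_lt.2 hgt
  | eq => simp only [evalR, eq_iff_le_not_lt, ← not_lt, hlt, hgt]
  | ge => exact le_iff_le_iff_lt_iff_lt.2 hlt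
  | gt => exact hgt

lemma evalR_sub_natCast_congr {a b a' b' : ℝ} (ha : ⌊a⌋ = ⌊a'⌋) (hb : ⌊b⌋ = ⌊b'⌋)
    (hab : Int.fract a < Int.fract b ↔ Int.fract a' < Int.fract b')
    (hba : Int.fract b < Int.fract a ↔ Int.fract b' < Int.fract a') (op : CCmp) (d : ℕ) :
    op.evalR (a - b) d ↔ op.evalR (a' - b') d :=
  evalR_congr_s14 (mod_cast sub_lt_intCast_congr ha hb hab d)
    (mod_cast intCast_lt_sub_congr ha hb hba d) op

end CCmp

section Valuations

variable {k : ℕ}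

lemma floor_eq_of_intPart_eq {v w : Val k} (hv : IsVal v) (hw : IsVal w)
    (h : intPart v = intPart w) (i : Fin (k + 1)) : ⌊v i⌋ = ⌊w i⌋ := by
  rw [← Int.toNat_of_nonneg (Int.floor_nonneg.2 (hv i)),
    ← Int.toNat_of_nonneg (Int.floor_nonneg.2 (hw i))]
  exact congrArg Nat.cast (congrFun h i)

lemma relFract_mem_Ico (v : Val k) (i : Fin (k + 1)) : relFract v i ∈ Set.Ico 0 1 := by
  unfold relFract
  split_ifs <;> exact ⟨Int.fract_nonneg _, Int.fract_lt_one _⟩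

lemma fract_relFract_sub_relFract_zero (v : Val k) (i : Fin k) :
    Int.fract (relFract v i.succ - relFract v 0) = Int.fract (v i.succ) := by
  have hsucc : relFract v i.succ = Int.fract (Int.fract (v i.succ) + relFract v 0) := by
    simp [relFract]
  refine Int.fract_eq_fract.2 ⟨-⌊v i.succ⌋ - ⌊Int.fract (v i.succ) + relFract v 0⌋, ?_⟩
  rw [hsucc, ← Int.self_sub_floor, ← Int.self_sub_floor (v i.succ)]
  push_cast
  ring

lemma PatternOf.relFract_lt_iff {v₀ v₁ w₀ w₁ : Val k} {η : PatSeq k} (hv : PatternOf v₀ v₁ η)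
    (hw : PatternOf w₀ w₁ η) (b b' : Bool) (i j : Fin (k + 1)) :
    relFract (bval v₀ v₁ b) i < relFract (bval v₀ v₁ b') j ↔
      relFract (bval w₀ w₁ b) i < relFract (bval w₀ w₁ b') j := by
  obtain ⟨⟨-, -, -, -, hcover⟩, hv⟩ := hv
  obtain ⟨p, hp, hip⟩ := hcover (i, b)
  obtain ⟨q, hq, hjq⟩ := hcover (j, b')
  obtain ⟨m, rfl⟩ := List.get_of_mem hp
  obtain ⟨m', rfl⟩ := List.get_of_mem hq
  exact (hv m m' b b' i j hip hjq).2.trans (hw.2 m m' b b' i j hip hjq).2.symm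

lemma PairEquiv.relFract_lt_iff {va vb vc vd : Val k} (h : PairEquiv va vb vc vd)
    (i j : Fin (k + 1)) :
    relFract vb i < relFract vb j ↔ relFract vd i < relFract vd j := by
  obtain ⟨⟨_, hab, hcd⟩, -⟩ := h
  exact hab.relFract_lt_iff hcd true true i j

lemma fract_relFract_sub_lt_congr {v w : Val k}
    (hord : ∀ i j, relFract v i < relFract v j ↔ relFract w i < relFract w j)
    (i j l : Fin (k + 1)) :
    Int.fract (relFract v i - relFract v l) < Int.fract (relFract v j - relFract v l) ↔
      Int.fract (relFract w i - relFract w l) < Int.fract (relFract w j - relFract w l) := by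
  simp only [fract_sub_lt_fract_sub_iff, relFract_mem_Ico, ← not_lt, hord]

lemma fract_lt_fract_congr {v w : Val k}
    (hord : ∀ i j, relFract v i < relFract v j ↔ relFract w i < relFract w j)
    (i j : Fin k) :
    Int.fract (v i.succ) < Int.fract (v j.succ) ↔
      Int.fract (w i.succ) < Int.fract (w j.succ) := by
  simpa only [fract_relFract_sub_relFract_zero] using
    fract_relFract_sub_lt_congr hord i.succ j.succ 0

lemma fract_pos_congr {v w : Val k}
    (hord : ∀ i j, relFract v i < relFract v j ↔ relFract w i < relFract w j)
    (i : Fin k) : 0 < Int.fract (v i.succ) ↔ 0 < Int.fract (w i.succ) := by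
  simpa only [fract_relFract_sub_relFract_zero, sub_self, Int.fract_zero] using
    fract_relFract_sub_lt_congr hord 0 i.succ 0

end Valuations

theorem test_equiv_general {k : ℕ} {v w : Val k} (hfloor : ∀ i, ⌊v i⌋ = ⌊w i⌋)
    (hord : ∀ i j, relFract v i < relFract v j ↔ relFract w i < relFract w j) (c : CC k) :
    c.sat v ↔ c.sat w := by
  induction c with
  | diff i j op d =>
    exact CCmp.evalR_sub_natCast_congr (hfloor _) (hfloor _) (fract_lt_fract_congr hord i j)
      (fract_lt_fract_congr hord j i) op d
  | single i op d =>
    have hneg (x : ℝ) : ¬ Int.fract x < Int.fract 0 := by simp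
    have hpos : Int.fract 0 < Int.fract (v i.succ) ↔ Int.fract 0 < Int.fract (w i.succ) := by
      simpa only [Int.fract_zero] using fract_pos_congr hord i
    simpa only [CC.sat, sub_zero] using
      CCmp.evalR_sub_natCast_congr (hfloor _) rfl (iff_of_false (hneg _) (hneg _)) hpos op d
  | not c ih => exact not_congr ih
  | and c₁ c₂ ih₁ ih₂ => exact and_congr ih₁ ih₂

/-- Lemma `tests`(3). If `(va,vb) ≈ (vc,vd)` are initialized pairs,
then for every clock constraint `c`: `vb ∈ c` iff `vd ∈ c`. -/
theorem test_equiv (k : ℕ) (hk : 1 ≤ k) (va vb vc vd : Val k)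
    (hva : IsVal va) (hvb : IsVal vb) (hvc : IsVal vc) (hvd : IsVal vd)
    (h0a : Initial va) (h0c : Initial vc)
    (heq : PairEquiv va vb vc vd) (c : CC k) :
    c.sat vb ↔ c.sat vd :=
  test_equiv_general (floor_eq_of_intPart_eq hvb hvd heq.2.2) heq.relFract_lt_iff c

end PTApaper
end
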